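/- arXiv:2408.03530 — 2 statements merged into one kernel-verified Lean document; each statement's English description precedes it below -/
import Mathlib

section
/- Assume RA and ER. Then the probability of defiers p_df = P(T=df) satisfies the following bounds: for every Borel set A ⊆ ℝ and each s ∈ {0,1}, p_df ≥ P(Y∈A, D=s | Z=1−s) − P(Y∈A, D=s | Z=s); and p_df ≤ min{ P(D=1 | Z=0), P(D=0 | Z=1) }. -/
open MeasureTheory ProbabilityTheory

/-- Conditional probability `P(s | t)` as a real number. -/
noncomputable def pr {Ω : Type*} [MeasurableSpace Ω] (P : Measure Ω) (t s : Set Ω) : ℝ :=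
  ((P[|t]) s).toReal

/-- Conditional expectation `E[f | t]` as a real number. -/
noncomputable def ce {Ω : Type*} [MeasurableSpace Ω] (P : Measure Ω) (t : Set Ω) (f : Ω → ℝ) : ℝ :=
  ∫ ω, f ω ∂(P[|t])

/-- Always-takers. -/
def typeA {Ω : Type*} (D0 D1 : Ω → ℝ) : Set Ω := {ω | D0 ω = 1 ∧ D1 ω = 1}
/-- Never-takers. -/
def typeN {Ω : Type*} (D0 D1 : Ω → ℝ) : Set Ω := {ω | D0 ω = 0 ∧ D1 ω = 0}
/-- Compliers. -/
def typeC {Ω : Type*} (D0 D1 : Ω → ℝ) : Set Ω := {ω | D0 ω = 0 ∧ D1 ω = 1}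
/-- Defiers. -/
def typeDF {Ω : Type*} (D0 D1 : Ω → ℝ) : Set Ω := {ω | D0 ω = 1 ∧ D1 ω = 0}

/-!
On the event `Z = z` the observed pair is `(Y, D) = (Y_z, D_z)`, and `Z` is independent of the
potential variables, so conditioning on `Z = z` reveals the unconditional law of `(Y_z, D_z)`. Each
difference of conditional probabilities is therefore a difference `P(S) - P(T)` with
`S = {Y_d ∈ A, D_z = d}` and `T = {Y_d ∈ A, D_z' = d}`, where by exclusion the outcome `Y_d` is the
same in both events. A point of `S` outside `T` must have `D_z = d` and `D_z' ≠ d`: its treatment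
leaves `d` as the instrument moves from `z` to `z'`. For `d = 1, z = 0, z' = 1`, and equally for
`d = 0, z = 1, z' = 0`, these units are the defiers.
-/

section Measure

variable {Ω : Type*} [MeasurableSpace Ω] {P : Measure Ω}

lemma pr_congr_inter {t s s' : Set Ω} (ht : MeasurableSet t) (h : t ∩ s = t ∩ s') :
    pr P t s = pr P t s' := by
  rw [pr, pr, cond_apply ht, cond_apply ht, h]

variable [IsFiniteMeasure P]

lemma measureReal_sub_le_of_ae_le_union {S T U : Set Ω} (h : S ≤ᵐ[P] (T ∪ U : Set Ω)) :
    P.real S - P.real T ≤ P.real U := by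
  have hST : P.real S ≤ P.real (T ∪ U) := ENNReal.toReal_mono (by finiteness) (measure_mono_ae h)
  linarith [measureReal_union_le (μ := P) T U]

lemma pr_preimage_preimage_of_indepFun {𝓧 𝓩 : Type*} [MeasurableSpace 𝓧] [MeasurableSpace 𝓩]
    {X : Ω → 𝓧} {Z : Ω → 𝓩} (hXZ : IndepFun X Z P) (hZ : Measurable Z) {B : Set 𝓧}
    (hB : MeasurableSet B) {C : Set 𝓩} (hC : MeasurableSet C) (hPC : P (Z ⁻¹' C) ≠ 0) :
    pr P (Z ⁻¹' C) (X ⁻¹' B) = P.real (X ⁻¹' B) := by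
  rw [pr, cond_apply (hZ hC), hXZ.symm.measure_inter_preimage_eq_mul C B hC hB,
    ENNReal.inv_mul_cancel_left hPC (measure_ne_top P _), Measure.real]

end Measure

section PotentialOutcomes

variable {Ω 𝓨 𝓓 𝓩 : Type*} [MeasurableSpace Ω] [MeasurableSpace 𝓨]
  [MeasurableSpace 𝓓] [MeasurableSpace 𝓩] [MeasurableSingletonClass 𝓩]
  {P : Measure Ω} [IsFiniteMeasure P]
  {Yp : 𝓓 → 𝓩 → Ω → 𝓨} {Dp : 𝓩 → Ω → 𝓓} {Z : Ω → 𝓩} {D : Ω → 𝓓} {Y : Ω → 𝓨}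

lemma pr_treatment_mem_eq (hZ : Measurable Z) (hD : ∀ ω, D ω = Dp (Z ω) ω) {z : 𝓩}
    (hz : P {ω | Z ω = z} ≠ 0) (hind : IndepFun (Dp z) Z P) {B : Set 𝓓} (hB : MeasurableSet B) :
    pr P {ω | Z ω = z} {ω | D ω ∈ B} = P.real {ω | Dp z ω ∈ B} := by
  refine (pr_congr_inter (hZ (.singleton z)) ?_).trans
    (pr_preimage_preimage_of_indepFun hind hZ hB (.singleton z) hz)
  ext ω
  refine and_congr_right fun (hω : Z ω = z) => ?_
  simp only [Set.mem_ofPred_eq, Set.mem_preimage, hD, hω]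

variable [MeasurableSingletonClass 𝓓]

lemma pr_outcome_mem_and_treatment_eq (hZ : Measurable Z) (hD : ∀ ω, D ω = Dp (Z ω) ω)
    (hY : ∀ ω, Y ω = Yp (D ω) (Z ω) ω) {z : 𝓩} (hz : P {ω | Z ω = z} ≠ 0) {d : 𝓓}
    (hind : IndepFun (fun ω => (Yp d z ω, Dp z ω)) Z P) {A : Set 𝓨} (hA : MeasurableSet A) :
    pr P {ω | Z ω = z} {ω | Y ω ∈ A ∧ D ω = d} = P.real {ω | Yp d z ω ∈ A ∧ Dp z ω = d} := by
  refine (pr_congr_inter (hZ (.singleton z)) ?_).trans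
    (pr_preimage_preimage_of_indepFun hind hZ (hA.prod (.singleton d)) (.singleton z) hz)
  ext ω
  refine and_congr_right fun (hω : Z ω = z) => ?_
  have hDz : D ω = Dp z ω := hω ▸ hD ω
  simp only [Set.mem_ofPred_eq, Set.mem_preimage, Set.mem_prod, Set.mem_singleton_iff, hY, hω,
    ← hDz]
  exact and_congr_left fun hd => by rw [hd]

theorem defier_probability_bounds_general (hZ : Measurable Z) (hD : ∀ ω, D ω = Dp (Z ω) ω)
    (hY : ∀ ω, Y ω = Yp (D ω) (Z ω) ω)
    (RA : ∀ d z, IndepFun (fun ω => (Yp d z ω, Dp z ω)) Z P)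
    (ER : ∀ d z z', Yp d z =ᵐ[P] Yp d z')
    {z z' : 𝓩} (hz : P {ω | Z ω = z} ≠ 0) (hz' : P {ω | Z ω = z'} ≠ 0) (d : 𝓓) :
    (∀ A : Set 𝓨, MeasurableSet A →
      P.real {ω | Dp z ω = d ∧ Dp z' ω ≠ d}
        ≥ pr P {ω | Z ω = z} {ω | Y ω ∈ A ∧ D ω = d}
          - pr P {ω | Z ω = z'} {ω | Y ω ∈ A ∧ D ω = d})
    ∧ P.real {ω | Dp z ω = d ∧ Dp z' ω ≠ d}
      ≤ min (pr P {ω | Z ω = z} {ω | D ω = d}) (pr P {ω | Z ω = z'} {ω | D ω ≠ d}) := by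
  have hDp (z : 𝓩) : IndepFun (Dp z) Z P := (RA d z).comp measurable_snd measurable_id
  constructor
  · intro A hA
    rw [pr_outcome_mem_and_treatment_eq hZ hD hY hz (RA d z) hA,
      pr_outcome_mem_and_treatment_eq hZ hD hY hz' (RA d z') hA]
    apply measureReal_sub_le_of_ae_le_union
    filter_upwards [ER d z z'] with ω hω ⟨hYA, hDd⟩
    by_cases hd : Dp z' ω = d
    · exact .inl ⟨hω ▸ hYA, hd⟩
    · exact .inr ⟨hDd, hd⟩
  · have h_eq : pr P {ω | Z ω = z} {ω | D ω = d} = P.real {ω | Dp z ω = d} :=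
      pr_treatment_mem_eq hZ hD hz (hDp z) (.singleton d)
    have h_ne : pr P {ω | Z ω = z'} {ω | D ω ≠ d} = P.real {ω | Dp z' ω ≠ d} :=
      pr_treatment_mem_eq hZ hD hz' (hDp z') (MeasurableSet.singleton d).compl
    rw [h_eq, h_ne]
    exact le_min (measureReal_mono fun _ h => h.1) (measureReal_mono fun _ h => h.2)

end PotentialOutcomes

section Binary

variable {Ω : Type*}

/-- The potential treatment `D_z`, with the instrument value `z` as an argument. It is extended
affinely from `z ∈ {0, 1}` to real `z`, so that `D = D₁ Z + D₀ (1 - Z)` says `D = D_Z`. -/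
def potentialTreatment (D0 D1 : Ω → ℝ) (z : ℝ) (ω : Ω) : ℝ :=
  D1 ω * z + D0 ω * (1 - z)

/-- The potential outcome `Y_{dz}`, with the treatment and instrument values as arguments; affine
in each of them, for the same reason as `potentialTreatment`. -/
def potentialOutcome (Y11 Y10 Y01 Y00 : Ω → ℝ) (d z : ℝ) (ω : Ω) : ℝ :=
  (Y11 ω * z + Y10 ω * (1 - z)) * d + (Y01 ω * z + Y00 ω * (1 - z)) * (1 - d)

variable {Y11 Y10 Y01 Y00 D0 D1 Z D : Ω → ℝ}

lemma potentialTreatment_zero : potentialTreatment D0 D1 0 = D0 := by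
  ext ω; simp [potentialTreatment]

lemma potentialTreatment_one : potentialTreatment D0 D1 1 = D1 := by
  ext ω; simp [potentialTreatment]

lemma setOf_ne_one_eq_setOf_eq_zero (hD : ∀ ω, D ω = 0 ∨ D ω = 1) :
    {ω | D ω ≠ 1} = {ω | D ω = 0} := by
  ext ω; rcases hD ω with h | h <;> simp [h]

lemma typeDF_eq_setOf_ne_one (hD1 : ∀ ω, D1 ω = 0 ∨ D1 ω = 1) :
    typeDF D0 D1 = {ω | D0 ω = 1 ∧ D1 ω ≠ 1} := by
  ext ω; rcases hD1 ω with h | h <;> simp [typeDF, h]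

lemma typeDF_eq_setOf_ne_zero (hD0 : ∀ ω, D0 ω = 0 ∨ D0 ω = 1) :
    typeDF D0 D1 = {ω | D1 ω = 0 ∧ D0 ω ≠ 0} := by
  ext ω; rcases hD0 ω with h | h <;> simp [typeDF, h]

lemma potentialTreatment_eq_zero_or_one (hD0 : ∀ ω, D0 ω = 0 ∨ D0 ω = 1)
    (hD1 : ∀ ω, D1 ω = 0 ∨ D1 ω = 1) {z : ℝ} (hz : z = 0 ∨ z = 1) (ω : Ω) :
    potentialTreatment D0 D1 z ω = 0 ∨ potentialTreatment D0 D1 z ω = 1 := by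
  rcases hz with rfl | rfl
  · rw [potentialTreatment_zero]; exact hD0 ω
  · rw [potentialTreatment_one]; exact hD1 ω

variable [MeasurableSpace Ω] {P : Measure Ω}

lemma indepFun_potentialOutcome_potentialTreatment
    (RA : IndepFun (fun ω => (Y11 ω, Y10 ω, Y01 ω, Y00 ω, D0 ω, D1 ω)) Z P) (d z : ℝ) :
    IndepFun (fun ω => (potentialOutcome Y11 Y10 Y01 Y00 d z ω, potentialTreatment D0 D1 z ω))
      Z P :=
  RA.comp (φ := fun (y11, y10, y01, y00, d0, d1) =>
    ((y11 * z + y10 * (1 - z)) * d + (y01 * z + y00 * (1 - z)) * (1 - d), d1 * z + d0 * (1 - z)))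
    (by fun_prop) measurable_id

lemma potentialOutcome_ae_eq_of_exclusion (ER1 : ∀ᵐ ω ∂P, Y11 ω = Y10 ω)
    (ER0 : ∀ᵐ ω ∂P, Y01 ω = Y00 ω) (d z z' : ℝ) :
    potentialOutcome Y11 Y10 Y01 Y00 d z =ᵐ[P] potentialOutcome Y11 Y10 Y01 Y00 d z' := by
  filter_upwards [ER1, ER0] with ω h1 h0
  rw [potentialOutcome, potentialOutcome, h1, h0]
  ring

lemma measure_setOf_eq_zero_ne_zero [IsProbabilityMeasure P] (hZ : Measurable Z)
    (hZb : ∀ ω, Z ω = 0 ∨ Z ω = 1) (hlt : P {ω | Z ω = 1} < 1) : P {ω | Z ω = 0} ≠ 0 := by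
  rw [← setOf_ne_one_eq_setOf_eq_zero hZb]
  exact mt (prob_compl_eq_zero_iff (hZ (.singleton 1))).mp hlt.ne

end Binary

theorem defier_probability_bounds
    {Ω : Type*} [MeasurableSpace Ω] (P : Measure Ω) [IsProbabilityMeasure P]
    (Y11 Y10 Y01 Y00 D0 D1 Z D Y : Ω → ℝ)
    (hY11m : Measurable Y11) (hY10m : Measurable Y10)
    (hY01m : Measurable Y01) (hY00m : Measurable Y00)
    (hD0m : Measurable D0) (hD1m : Measurable D1) (hZm : Measurable Z)
    (hD0b : ∀ ω, D0 ω = 0 ∨ D0 ω = 1) (hD1b : ∀ ω, D1 ω = 0 ∨ D1 ω = 1)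
    (hZb : ∀ ω, Z ω = 0 ∨ Z ω = 1)
    (hZpos : 0 < P {ω | Z ω = 1}) (hZlt : P {ω | Z ω = 1} < 1)
    (hDdef : ∀ ω, D ω = D1 ω * Z ω + D0 ω * (1 - Z ω))
    (hYdef : ∀ ω, Y ω = (Y11 ω * Z ω + Y10 ω * (1 - Z ω)) * D ω
        + (Y01 ω * Z ω + Y00 ω * (1 - Z ω)) * (1 - D ω))
    (RA : IndepFun (fun ω => (Y11 ω, Y10 ω, Y01 ω, Y00 ω, D0 ω, D1 ω)) Z P)
    (ER1 : ∀ᵐ ω ∂P, Y11 ω = Y10 ω) (ER0 : ∀ᵐ ω ∂P, Y01 ω = Y00 ω) :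
    (∀ A : Set ℝ, MeasurableSet A → ∀ s : ℝ, s = 0 ∨ s = 1 →
      (P (typeDF D0 D1)).toReal
        ≥ pr P {ω | Z ω = 1 - s} {ω | Y ω ∈ A ∧ D ω = s}
          - pr P {ω | Z ω = s} {ω | Y ω ∈ A ∧ D ω = s})
  ∧ (P (typeDF D0 D1)).toReal
      ≤ min (pr P {ω | Z ω = 0} {ω | D ω = 1}) (pr P {ω | Z ω = 1} {ω | D ω = 0}) := by
  have hz0 := measure_setOf_eq_zero_ne_zero hZm hZb hZlt
  have hDb (ω : Ω) : D ω = 0 ∨ D ω = 1 :=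
    hDdef ω ▸ potentialTreatment_eq_zero_or_one hD0b hD1b (hZb ω) ω
  have bounds {z z' : ℝ} (hz : P {ω | Z ω = z} ≠ 0) (hz' : P {ω | Z ω = z'} ≠ 0) (d : ℝ) :=
    defier_probability_bounds_general hZm hDdef hYdef
      (indepFun_potentialOutcome_potentialTreatment RA)
      (potentialOutcome_ae_eq_of_exclusion ER1 ER0) hz hz' d
  have bounds_one := bounds hz0 hZpos.ne' 1
  have bounds_zero := bounds hZpos.ne' hz0 0
  rw [potentialTreatment_zero, potentialTreatment_one, ← typeDF_eq_setOf_ne_one hD1b,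
    setOf_ne_one_eq_setOf_eq_zero hDb] at bounds_one
  rw [potentialTreatment_zero, potentialTreatment_one, ← typeDF_eq_setOf_ne_zero hD0b]
    at bounds_zero
  refine ⟨?_, bounds_one.2⟩
  rintro A hA s (rfl | rfl)
  · rw [sub_zero]
    exact bounds_zero.1 A hA
  · rw [sub_self]
    exact bounds_one.1 A hA
end

section
/- Assume RA and ER, and suppose there exist reals y_lo ≤ y_hi such that y_lo ≤ Y₁ ≤ y_hi and y_lo ≤ Y₀ ≤ y_hi almost surely. Then for all z, z' ∈ {0,1}: E[Y·D + (1−D)·y_lo | Z=z] ≤ E[Y·D + (1−D)·y_hi | Z=z'], and E[Y·(1−D) + D·y_lo | Z=z] ≤ E[Y·(1−D) + D·y_hi | Z=z']. -/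
open MeasureTheory ProbabilityTheory

/-!
Where `D = 1` the observed `Y` is `Y₁`, and where `D = 0` a constant replaces the unobserved value
of `Y₁`. So imputing `ylo` gives a variable below `Y₁` and imputing `yhi` one above it, whatever the
value of the instrument. As `E[Y₁ | Z = z]` does not depend on `z`, it separates the lower bounds at
all `z` from the upper bounds at all `z'`. The other arm is the same argument with `1 - D` for `D`.
-/

section ConditionalMean

variable {Ω ζ : Type*} [MeasurableSpace Ω] {P : Measure Ω}

theorem ce_eq_inv_mul_setIntegral (s : Set Ω) (f : Ω → ℝ) :
    ce P s f = (P s)⁻¹.toReal * ∫ ω in s, f ω ∂P :=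
  integral_smul_measure f _

theorem ce_mono_ae {f g : Ω → ℝ} (s : Set Ω) (hf : Integrable f P) (hg : Integrable g P)
    (hfg : f ≤ᵐ[P] g) : ce P s f ≤ ce P s g := by
  simp only [ce_eq_inv_mul_setIntegral]
  exact mul_le_mul_of_nonneg_left (setIntegral_mono_ae hf.integrableOn hg.integrableOn hfg)
    ENNReal.toReal_nonneg

/-- Mean independence of `f` from the instrument `Z`: the conditional mean `E[f | Z = z]` does not
depend on `z`. Only values `z` of positive probability are compared, because `ce` is `0` on null
events; this is the usual notion for discrete `Z`. -/
def MeanIndep (P : Measure Ω) (f : Ω → ℝ) (Z : Ω → ζ) : Prop :=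
  ∀ ⦃z z' : ζ⦄, P {ω | Z ω = z} ≠ 0 → P {ω | Z ω = z'} ≠ 0 →
    ce P {ω | Z ω = z} f = ce P {ω | Z ω = z'} f

theorem ce_eq_integral_of_indepFun [IsFiniteMeasure P] [MeasurableSpace ζ]
    [MeasurableSingletonClass ζ] {f : Ω → ℝ} {Z : Ω → ζ} (h : IndepFun f Z P)
    (hf : AEMeasurable f P) (hZ : Measurable Z) {z : ζ} (hz : P {ω | Z ω = z} ≠ 0) :
    ce P {ω | Z ω = z} f = ∫ ω, f ω ∂P := by
  have hset : ∫ ω in {ω | Z ω = z}, f ω ∂P = P.real {ω | Z ω = z} * ∫ ω, f ω ∂P :=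
    Indep.setIntegral_eq_mul (f := id) hZ.comap_le ((IndepFun_iff_Indep _ _ _).1 h.symm) hf
      ⟨{z}, measurableSet_singleton z, rfl⟩ aestronglyMeasurable_id
  rw [ce_eq_inv_mul_setIntegral, hset, ENNReal.toReal_inv]
  exact inv_mul_cancel_left₀ (ENNReal.toReal_ne_zero.2 ⟨hz, measure_ne_top P _⟩) _

theorem MeanIndep.of_indepFun [IsFiniteMeasure P] [MeasurableSpace ζ]
    [MeasurableSingletonClass ζ] {f : Ω → ℝ} {Z : Ω → ζ} (h : IndepFun f Z P)
    (hf : AEMeasurable f P) (hZ : Measurable Z) : MeanIndep P f Z := fun _ _ hz hz' ↦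
  (ce_eq_integral_of_indepFun h hf hZ hz).trans (ce_eq_integral_of_indepFun h hf hZ hz').symm

end ConditionalMean

section Imputation

/-- The outcome `Y` where the indicator `D` is `1`, with the constant `c` imputed where `D` is `0`.
The indicator is real-valued, so that this is the expression `Y·D + (1 − D)·c` of Manski's
bounds. -/
def impute {Ω : Type*} (Y D : Ω → ℝ) (c : ℝ) (ω : Ω) : ℝ := Y ω * D ω + (1 - D ω) * c

theorem impute_one_sub {Ω : Type*} (Y D : Ω → ℝ) (c : ℝ) :
    impute Y (fun ω ↦ 1 - D ω) c = fun ω ↦ Y ω * (1 - D ω) + D ω * c := by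
  ext ω
  rw [impute, sub_sub_cancel]

variable {Ω ζ : Type*} [MeasurableSpace Ω] {P : Measure Ω} {Y Y₁ D : Ω → ℝ}

theorem impute_ae_eq (hD : ∀ᵐ ω ∂P, D ω = 0 ∨ D ω = 1) (hY : ∀ᵐ ω ∂P, D ω = 1 → Y ω = Y₁ ω)
    (c : ℝ) : impute Y D c =ᵐ[P] impute Y₁ D c := by
  filter_upwards [hD, hY] with ω hDω hYω
  rcases hDω with h | h <;> simp [impute, h, hYω]

theorem integrable_impute [IsFiniteMeasure P] (hDm : AEMeasurable D P)
    (hD : ∀ᵐ ω ∂P, D ω = 0 ∨ D ω = 1) (hY : Integrable Y P) (c : ℝ) :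
    Integrable (impute Y D c) P := by
  have hD_norm : ∀ᵐ ω ∂P, ‖D ω‖ ≤ 1 := by
    filter_upwards [hD] with ω h
    rcases h with h | h <;> simp [h]
  have hD_int : Integrable D P := .of_bound hDm.aestronglyMeasurable 1 hD_norm
  exact (hY.mul_bdd hDm.aestronglyMeasurable hD_norm).add
    (((integrable_const 1).sub hD_int).mul_const c)

theorem impute_ae_le {lo : ℝ} (hD : ∀ᵐ ω ∂P, D ω = 0 ∨ D ω = 1) (hlo : ∀ᵐ ω ∂P, lo ≤ Y ω) :
    impute Y D lo ≤ᵐ[P] Y := by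
  filter_upwards [hD, hlo] with ω hDω hloω
  rcases hDω with h | h <;> simp [impute, h, hloω]

theorem ae_le_impute {hi : ℝ} (hD : ∀ᵐ ω ∂P, D ω = 0 ∨ D ω = 1) (hhi : ∀ᵐ ω ∂P, Y ω ≤ hi) :
    Y ≤ᵐ[P] impute Y D hi := by
  filter_upwards [hD, hhi] with ω hDω hhiω
  rcases hDω with h | h <;> simp [impute, h, hhiω]

theorem MeanIndep.ce_impute_le_ce_impute [IsFiniteMeasure P] {Z : Ω → ζ} {lo hi : ℝ}
    (hind : MeanIndep P Y₁ Z) (hY₁ : Integrable Y₁ P) (hDm : AEMeasurable D P)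
    (hD : ∀ᵐ ω ∂P, D ω = 0 ∨ D ω = 1) (hY : ∀ᵐ ω ∂P, D ω = 1 → Y ω = Y₁ ω)
    (hlo : ∀ᵐ ω ∂P, lo ≤ Y₁ ω) (hhi : ∀ᵐ ω ∂P, Y₁ ω ≤ hi)
    {z z' : ζ} (hz : P {ω | Z ω = z} ≠ 0) (hz' : P {ω | Z ω = z'} ≠ 0) :
    ce P {ω | Z ω = z} (impute Y D lo) ≤ ce P {ω | Z ω = z'} (impute Y D hi) := by
  have hYc (c : ℝ) : impute Y D c =ᵐ[P] impute Y₁ D c := impute_ae_eq hD hY c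
  have hint (c : ℝ) : Integrable (impute Y D c) P :=
    (integrable_impute hDm hD hY₁ c).congr (hYc c).symm
  calc ce P {ω | Z ω = z} (impute Y D lo)
      ≤ ce P {ω | Z ω = z} Y₁ :=
        ce_mono_ae _ (hint lo) hY₁ ((hYc lo).trans_le (impute_ae_le hD hlo))
    _ = ce P {ω | Z ω = z'} Y₁ := hind hz hz'
    _ ≤ ce P {ω | Z ω = z'} (impute Y D hi) :=
        ce_mono_ae _ hY₁ (hint hi) ((ae_le_impute hD hhi).trans_eq (hYc hi).symm)

end Imputation

theorem measure_ne_zero_of_union_eq_univ {Ω : Type*} [MeasurableSpace Ω] {P : Measure Ω}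
    {s t : Set Ω} (hst : s ∪ t = Set.univ) (ht : P t < P Set.univ) : P s ≠ 0 := by
  intro hs
  have hle : P Set.univ ≤ P s + P t := hst ▸ measure_union_le s t
  rw [hs, zero_add] at hle
  exact hle.not_gt ht

theorem switch_eq_zero_or_eq_one {d₀ d₁ z : ℝ} (hd₀ : d₀ = 0 ∨ d₀ = 1) (hd₁ : d₁ = 0 ∨ d₁ = 1)
    (hz : z = 0 ∨ z = 1) :
    d₁ * z + d₀ * (1 - z) = 0 ∨ d₁ * z + d₀ * (1 - z) = 1 := by
  rcases hz with rfl | rfl <;> simpa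

theorem manski_mean_independence_implications_general
    {Ω ζ : Type*} [MeasurableSpace Ω] {P : Measure Ω} [IsFiniteMeasure P]
    {Y₁ Y₀ D Y : Ω → ℝ} {Z : Ω → ζ} {ylo yhi : ℝ}
    (hY₁m : AEMeasurable Y₁ P) (hY₀m : AEMeasurable Y₀ P) (hDm : AEMeasurable D P)
    (hD : ∀ᵐ ω ∂P, D ω = 0 ∨ D ω = 1)
    (hY : ∀ᵐ ω ∂P, Y ω = Y₁ ω * D ω + Y₀ ω * (1 - D ω))
    (hind₁ : MeanIndep P Y₁ Z) (hind₀ : MeanIndep P Y₀ Z)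
    (hbdd₁ : ∀ᵐ ω ∂P, ylo ≤ Y₁ ω ∧ Y₁ ω ≤ yhi) (hbdd₀ : ∀ᵐ ω ∂P, ylo ≤ Y₀ ω ∧ Y₀ ω ≤ yhi)
    {z z' : ζ} (hz : P {ω | Z ω = z} ≠ 0) (hz' : P {ω | Z ω = z'} ≠ 0) :
    ce P {ω | Z ω = z} (fun ω => Y ω * D ω + (1 - D ω) * ylo)
        ≤ ce P {ω | Z ω = z'} (fun ω => Y ω * D ω + (1 - D ω) * yhi)
      ∧ ce P {ω | Z ω = z} (fun ω => Y ω * (1 - D ω) + D ω * ylo)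
        ≤ ce P {ω | Z ω = z'} (fun ω => Y ω * (1 - D ω) + D ω * yhi) := by
  have hY_treated : ∀ᵐ ω ∂P, D ω = 1 → Y ω = Y₁ ω := by
    filter_upwards [hY] with ω hYω hDω
    simp [hYω, hDω]
  have hY_untreated : ∀ᵐ ω ∂P, 1 - D ω = 1 → Y ω = Y₀ ω := by
    filter_upwards [hY] with ω hYω hDω
    simp [hYω, sub_eq_self.1 hDω]
  have hD_compl : ∀ᵐ ω ∂P, 1 - D ω = 0 ∨ 1 - D ω = 1 := by
    filter_upwards [hD] with ω h
    rcases h with h | h <;> simp [h]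
  constructor
  · exact hind₁.ce_impute_le_ce_impute (.of_mem_Icc ylo yhi hY₁m hbdd₁) hDm hD hY_treated
      (hbdd₁.mono fun _ h ↦ h.1) (hbdd₁.mono fun _ h ↦ h.2) hz hz'
  · simpa only [impute_one_sub] using
      hind₀.ce_impute_le_ce_impute (.of_mem_Icc ylo yhi hY₀m hbdd₀) (hDm.const_sub 1)
        hD_compl hY_untreated (hbdd₀.mono fun _ h ↦ h.1) (hbdd₀.mono fun _ h ↦ h.2) hz hz'

theorem manski_mean_independence_implications
    {Ω : Type*} [MeasurableSpace Ω] (P : Measure Ω) [IsProbabilityMeasure P]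
    (Y11 Y10 Y01 Y00 D0 D1 Z D Y : Ω → ℝ)
    (hY11m : Measurable Y11) (hY10m : Measurable Y10)
    (hY01m : Measurable Y01) (hY00m : Measurable Y00)
    (hD0m : Measurable D0) (hD1m : Measurable D1) (hZm : Measurable Z)
    (hD0b : ∀ ω, D0 ω = 0 ∨ D0 ω = 1) (hD1b : ∀ ω, D1 ω = 0 ∨ D1 ω = 1)
    (hZb : ∀ ω, Z ω = 0 ∨ Z ω = 1)
    (hZpos : 0 < P {ω | Z ω = 1}) (hZlt : P {ω | Z ω = 1} < 1)
    (hDdef : ∀ ω, D ω = D1 ω * Z ω + D0 ω * (1 - Z ω))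
    (hYdef : ∀ ω, Y ω = (Y11 ω * Z ω + Y10 ω * (1 - Z ω)) * D ω
        + (Y01 ω * Z ω + Y00 ω * (1 - Z ω)) * (1 - D ω))
    (RA : IndepFun (fun ω => (Y11 ω, Y10 ω, Y01 ω, Y00 ω, D0 ω, D1 ω)) Z P)
    (ER1 : ∀ᵐ ω ∂P, Y11 ω = Y10 ω) (ER0 : ∀ᵐ ω ∂P, Y01 ω = Y00 ω)
    (ylo yhi : ℝ) (hle : ylo ≤ yhi)
    (hY1bdd : ∀ᵐ ω ∂P, ylo ≤ Y11 ω ∧ Y11 ω ≤ yhi)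
    (hY0bdd : ∀ᵐ ω ∂P, ylo ≤ Y00 ω ∧ Y00 ω ≤ yhi) :
    ∀ z z' : ℝ, z = 0 ∨ z = 1 → z' = 0 ∨ z' = 1 →
      ce P {ω | Z ω = z} (fun ω => Y ω * D ω + (1 - D ω) * ylo)
        ≤ ce P {ω | Z ω = z'} (fun ω => Y ω * D ω + (1 - D ω) * yhi)
      ∧ ce P {ω | Z ω = z} (fun ω => Y ω * (1 - D ω) + D ω * ylo)
        ≤ ce P {ω | Z ω = z'} (fun ω => Y ω * (1 - D ω) + D ω * yhi) := by
  have hDm : Measurable D := by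
    rw [funext hDdef]
    fun_prop
  have hD (ω) : D ω = 0 ∨ D ω = 1 :=
    hDdef ω ▸ switch_eq_zero_or_eq_one (hD0b ω) (hD1b ω) (hZb ω)
  have hY : ∀ᵐ ω ∂P, Y ω = Y11 ω * D ω + Y00 ω * (1 - D ω) := by
    filter_upwards [ER1, ER0] with ω h₁ h₀
    rw [hYdef, ← h₁, h₀]
    ring
  have hind₁ : IndepFun Y11 Z P := RA.comp measurable_fst measurable_id
  have hind₀ : IndepFun Y00 Z P :=
    RA.comp (φ := fun p : ℝ × ℝ × ℝ × ℝ × ℝ × ℝ ↦ p.2.2.2.1) (by fun_prop) measurable_id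
  have hZ (z : ℝ) (hz : z = 0 ∨ z = 1) : P {ω | Z ω = z} ≠ 0 := by
    rcases hz with rfl | rfl
    · exact measure_ne_zero_of_union_eq_univ (Set.eq_univ_of_forall hZb)
        (measure_univ (μ := P) ▸ hZlt)
    · exact hZpos.ne'
  intro z z' hz hz'
  exact manski_mean_independence_implications_general hY11m.aemeasurable hY00m.aemeasurable
    hDm.aemeasurable (.of_forall hD) hY (.of_indepFun hind₁ hY11m.aemeasurable hZm)
    (.of_indepFun hind₀ hY00m.aemeasurable hZm) hY1bdd hY0bdd (hZ z hz) (hZ z' hz')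
end
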